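/- Consider problem DP1^(s) and suppose its optimal value is strictly positive. If (P*_1,…,P*_M) is an optimal solution of DP1^(s), then its active set is disjoint from the bad set and contained in the good set; that is, P*_m = 0 for every m with ‖h_m‖² ≤ ε(h_m), equivalently {m : P*_m > 0} ⊆ G. -/

import Mathlib

open scoped BigOperators Classical
open Finset

noncomputable section

/-- Euclidean inner product on `Fin L → ℝ`. -/
def ip {L : ℕ} (x y : Fin L → ℝ) : ℝ := ∑ i, x i * y i

/-- Squared Euclidean norm on `Fin L → ℝ`. -/
def nsq {L : ℕ} (x : Fin L → ℝ) : ℝ := ∑ i, (x i) ^ 2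

/-- ε(h) = ‖h‖²‖a‖² − ⟨h,a⟩². -/
def eps {L : ℕ} (a h : Fin L → ℝ) : ℝ := nsq h * nsq a - (ip h a) ^ 2

/-- Symmetric-policy computation rate R_h(P). -/
def Rsym {L : ℕ} (a h : Fin L → ℝ) (P : ℝ) : ℝ :=
  (1 / 2) * Real.logb 2 ((1 + P * nsq h) / (nsq a + P * eps a h))

/-- The vector √p∘h with entries √(p_l)·h_l. -/
def sqp {L : ℕ} (p h : Fin L → ℝ) : Fin L → ℝ := fun l => Real.sqrt (p l) * h l

/-- Asymmetric-policy computation rate R(h,p). -/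
def Rasym {L : ℕ} (a h p : Fin L → ℝ) : ℝ :=
  (1 / 2) * Real.logb 2 ((1 + nsq (sqp p h)) /
    (nsq a + (nsq (sqp p h) * nsq a - (ip (sqp p h) a) ^ 2)))

/-- The KKT water-filling-type solution P^KKT_h(λ). -/
def PKKT {L : ℕ} (a h : Fin L → ℝ) (lam : ℝ) : ℝ :=
  if ∃ t : ℝ, h = t • a then 1 / lam - 1 / nsq h
  else (-(2 * nsq h * nsq a - (ip h a) ^ 2) +
      Real.sqrt ((2 * nsq h * nsq a - (ip h a) ^ 2) ^ 2 -
        4 * (nsq h * eps a h) * (nsq a - (ip h a) ^ 2 / lam))) /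
    (2 * (nsq h * eps a h))

theorem aux_nsq_nonneg {L : ℕ} (x : Fin L → ℝ) : 0 ≤ nsq x :=
  Finset.sum_nonneg fun i _ => sq_nonneg _

theorem aux_eps_nonneg {L : ℕ} (a h : Fin L → ℝ) : 0 ≤ eps a h := by
  unfold eps ip nsq
  have := Finset.sum_mul_sq_le_sq_mul_sq Finset.univ h a
  linarith

theorem aux_nsq_one {L : ℕ} (a : Fin L → ℝ) (ha : a ≠ 0)
    (haint : ∀ i, ∃ n : ℤ, a i = (n : ℝ)) : 1 ≤ nsq a := by
  obtain ⟨i, hi⟩ := Function.ne_iff.mp ha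
  obtain ⟨n, hn⟩ := haint i
  have hn0 : n ≠ 0 := by
    rintro rfl
    exact hi (by simpa using hn)
  have h1 : (1 : ℝ) ≤ (a i) ^ 2 := by
    rw [hn]
    have : (1 : ℤ) ≤ n ^ 2 := by
      have : 0 < n ^ 2 := by positivity
      omega
    exact_mod_cast this
  exact h1.trans (Finset.single_le_sum (f := fun i => (a i) ^ 2)
    (fun j _ => sq_nonneg _) (Finset.mem_univ i))

theorem aux_bad {L : ℕ} (a h : Fin L → ℝ) (hA : 1 ≤ nsq a) (hb : nsq h ≤ eps a h)
    (P : ℝ) (hP : 0 ≤ P) : Rsym a h P ≤ 0 := by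
  unfold Rsym
  have h1 := aux_nsq_nonneg h
  have h2 := aux_eps_nonneg a h
  have h3 : P * nsq h ≤ P * eps a h := mul_le_mul_of_nonneg_left hb hP
  have h4 : 0 ≤ P * nsq h := mul_nonneg hP h1
  have := Real.logb_nonpos (b := 2) (x := (1 + P * nsq h) / (nsq a + P * eps a h))
    (by norm_num) (by apply div_nonneg <;> linarith)
    (by rw [div_le_one (by linarith)]; linarith)
  linarith

theorem aux_mono {L : ℕ} (a h : Fin L → ℝ) (hA : 1 ≤ nsq a) (hb : eps a h < nsq h)
    (P P' : ℝ) (hP : 0 ≤ P) (hPP : P < P') : Rsym a h P < Rsym a h P' := by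
  unfold Rsym
  have h1 := aux_nsq_nonneg h
  have h2 := aux_eps_nonneg a h
  have h4 : 0 ≤ P * nsq h := mul_nonneg hP h1
  have h5 : 0 ≤ P * eps a h := mul_nonneg hP h2
  have h6 : 0 ≤ P' * eps a h := mul_nonneg (by linarith) h2
  have h7 : eps a h < nsq h * nsq a := by nlinarith
  have := Real.logb_lt_logb (b := 2) (x := (1 + P * nsq h) / (nsq a + P * eps a h))
    (y := (1 + P' * nsq h) / (nsq a + P' * eps a h))
    (by norm_num) (by apply div_pos <;> linarith)
    (by
      rw [div_lt_div_iff₀ (by linarith) (by linarith)]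
      nlinarith [mul_pos (sub_pos.2 hPP) (sub_pos.2 h7)])
  linarith

/-- Theorem 1: any positive-value optimal solution of DP1^(s) allocates zero
power to every channel state in the bad set; its active set is contained in the good set. -/
theorem stmt5 {L M : ℕ} (hL : 1 ≤ L)
    (a : Fin L → ℝ) (ha : a ≠ 0) (haint : ∀ i, ∃ n : ℤ, a i = (n : ℝ))
    (h : Fin M → Fin L → ℝ) (hh : ∀ m, h m ≠ 0)
    (f : Fin M → ℝ) (hf : ∀ m, 0 < f m) (hfsum : ∑ m, f m = 1)
    (Pbar : ℝ) (hPbar : 0 < Pbar)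
    (Pstar : Fin M → ℝ)
    (hfeas : (∀ m, 0 ≤ Pstar m) ∧ ∑ m, f m * Pstar m ≤ Pbar)
    (hopt : ∀ Q : Fin M → ℝ, (∀ m, 0 ≤ Q m) → ∑ m, f m * Q m ≤ Pbar →
      ∑ m, f m * max 0 (Rsym a (h m) (Q m)) ≤ ∑ m, f m * max 0 (Rsym a (h m) (Pstar m)))
    (hpos : 0 < ∑ m, f m * max 0 (Rsym a (h m) (Pstar m))) :
    ∀ m, nsq (h m) ≤ eps a (h m) → Pstar m = 0 := by
  intro b hb
  obtain ⟨hP0, hPs⟩ := hfeas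
  have hA := aux_nsq_one a ha haint
  by_contra hne
  have hPb : 0 < Pstar b := lt_of_le_of_ne (hP0 b) (Ne.symm hne)
  obtain ⟨k, -, hk⟩ := Finset.exists_lt_of_sum_lt (s := Finset.univ) (f := fun _ : Fin M => (0 : ℝ))
    (g := fun m => f m * max 0 (Rsym a (h m) (Pstar m))) (by simpa using hpos)
  have hRk : 0 < Rsym a (h k) (Pstar k) := by
    by_contra hc
    simp [max_eq_left (not_lt.1 hc)] at hk
  have hgood : eps a (h k) < nsq (h k) := by
    by_contra hc
    exact absurd (aux_bad a (h k) hA (not_lt.1 hc) _ (hP0 k)) (not_le.2 hRk)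
  have hkb : k ≠ b := by
    rintro rfl
    linarith
  have hfk := hf k
  have hd : 0 < f b * Pstar b / f k := div_pos (mul_pos (hf b) hPb) hfk
  let Q : Fin M → ℝ := fun m =>
    if m = k then Pstar k + f b * Pstar b / f k else if m = b then 0 else Pstar m
  have hQk : Q k = Pstar k + f b * Pstar b / f k := by simp [Q]
  have hQb : Q b = 0 := by simp [Q, hkb.symm]
  have hQo : ∀ m, m ≠ k → m ≠ b → Q m = Pstar m := by
    intro m h1 h2
    simp [Q, h1, h2]
  have hQ0 : ∀ m, 0 ≤ Q m := by
    intro m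
    by_cases h1 : m = k
    · rw [h1, hQk]; linarith [hP0 k]
    · by_cases h2 : m = b
      · rw [h2, hQb]
      · rw [hQo m h1 h2]; exact hP0 m
  have hQs : ∑ m, f m * Q m = ∑ m, f m * Pstar m := by
    have : ∀ m, f m * Q m = f m * Pstar m + (if m = k then f b * Pstar b else 0)
        - (if m = b then f b * Pstar b else 0) := by
      intro m
      by_cases h1 : m = k
      · subst h1
        rw [hQk, if_pos rfl, if_neg hkb]
        field_simp
        ring
      · by_cases h2 : m = b
        · subst h2
          rw [hQb, if_neg h1, if_pos rfl]
          ring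
        · rw [hQo m h1 h2, if_neg h1, if_neg h2]
          ring
    simp_rw [this]
    simp [Finset.sum_sub_distrib, Finset.sum_add_distrib]
  have hlt : Rsym a (h k) (Pstar k) < Rsym a (h k) (Q k) :=
    aux_mono a (h k) hA hgood _ _ (hP0 k) (by rw [hQk]; linarith)
  have hstrict : f k * max 0 (Rsym a (h k) (Pstar k)) < f k * max 0 (Rsym a (h k) (Q k)) := by
    rw [max_eq_right hRk.le, max_eq_right (hRk.trans hlt).le]
    exact mul_lt_mul_of_pos_left hlt hfk
  refine absurd (hopt Q hQ0 (hQs ▸ hPs)) (not_le.2 ?_)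
  refine Finset.sum_lt_sum (fun m _ => ?_) ⟨k, Finset.mem_univ k, hstrict⟩
  by_cases h1 : m = k
  · rw [h1]; exact hstrict.le
  · by_cases h2 : m = b
    · rw [h2, max_eq_left (aux_bad a (h b) hA hb _ (hP0 b)), mul_zero]
      exact mul_nonneg (hf b).le (le_max_left _ _)
    · rw [hQo m h1 h2]
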